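/- For natural numbers K, m, c with 1 ≤ m, m < K, 2 ≤ c, and c ≤ K, the ratio of binomial coefficients satisfies C(K - m, c) / C(K, c) < ((K - m)/K)^c as real numbers. -/

import Mathlib

/-!
Cancelling `c!`, the ratio of binomial coefficients `C(a, c) / C(n, c)` is the product over `i < c`
of the factors `(a - i) / (n - i)`. For `a < n`, subtracting the same positive amount from
numerator and denominator makes a fraction smaller, so every factor with `i ≥ 1` is strictly below
`a / n`, and for `c ≥ 2` there is such a factor. With denominators cleared this holds in `ℕ` also
for `i > a`, where truncated subtraction makes the factor zero.
-/

theorem tsub_mul_lt_mul_tsub {a n d : ℕ} (ha : 0 < a) (han : a < n) (hd : 0 < d) (hdn : d < n) :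
    (a - d) * n < a * (n - d) := by
  have had : a * d < a * n := Nat.mul_lt_mul_of_pos_left hdn ha
  have hda : a * d < d * n := mul_comm a d ▸ Nat.mul_lt_mul_of_pos_left han hd
  rw [Nat.sub_mul, Nat.mul_sub]
  exact Nat.sub_lt_sub_left had hda

theorem descFactorial_mul_pow_lt_pow_mul_descFactorial {a n c : ℕ} (ha : 0 < a) (han : a < n)
    (hc : 2 ≤ c) (hcn : c ≤ n) :
    a.descFactorial c * n ^ c < a ^ c * n.descFactorial c := by
  induction c, hc using Nat.le_induction with
  | base =>
    calc a.descFactorial 2 * n ^ 2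
        = a * n * ((a - 1) * n) := by rw [Nat.descFactorial_succ, Nat.descFactorial_one]; ring
      _ < a * n * (a * (n - 1)) :=
        Nat.mul_lt_mul_of_pos_left (tsub_mul_lt_mul_tsub ha han one_pos hcn)
          (Nat.mul_pos ha (ha.trans han))
      _ = a ^ 2 * n.descFactorial 2 := by rw [Nat.descFactorial_succ, Nat.descFactorial_one]; ring
  | succ d hd ih =>
    calc a.descFactorial (d + 1) * n ^ (d + 1)
        = a.descFactorial d * n ^ d * ((a - d) * n) := by rw [Nat.descFactorial_succ]; ring
      _ < a ^ d * n.descFactorial d * (a * (n - d)) :=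
        Nat.mul_lt_mul'' (ih (Nat.le_of_succ_le hcn))
          (tsub_mul_lt_mul_tsub ha han (two_pos.trans_le hd) hcn)
      _ = a ^ (d + 1) * n.descFactorial (d + 1) := by rw [Nat.descFactorial_succ]; ring

theorem choose_mul_pow_lt_pow_mul_choose {a n c : ℕ} (ha : 0 < a) (han : a < n)
    (hc : 2 ≤ c) (hcn : c ≤ n) :
    a.choose c * n ^ c < a ^ c * n.choose c := by
  have h := descFactorial_mul_pow_lt_pow_mul_descFactorial ha han hc hcn
  rw [Nat.descFactorial_eq_factorial_mul_choose, Nat.descFactorial_eq_factorial_mul_choose,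
    mul_assoc, mul_left_comm (a ^ c)] at h
  exact Nat.lt_of_mul_lt_mul_left h

theorem choose_ratio_lt_pow_general {α : Type*} [Semifield α] [LinearOrder α]
    [IsStrictOrderedRing α] {a n c : ℕ} (ha : 0 < a) (han : a < n) (hc : 2 ≤ c) (hcn : c ≤ n) :
    (a.choose c : α) / (n.choose c : α) < ((a : α) / (n : α)) ^ c := by
  have hn : 0 < (n : α) := Nat.cast_pos.2 (ha.trans han)
  have hchoose : 0 < (n.choose c : α) := Nat.cast_pos.2 (Nat.choose_pos hcn)
  rw [div_pow, div_lt_div_iff₀ hchoose (pow_pos hn c)]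
  exact_mod_cast choose_mul_pow_lt_pow_mul_choose ha han hc hcn

theorem choose_ratio_lt_pow (K m c : ℕ) (hm : 1 ≤ m) (hmK : m < K)
    (hc2 : 2 ≤ c) (hcK : c ≤ K) :
    (((K - m).choose c : ℝ)) / ((K.choose c : ℝ)) <
      (((K - m : ℕ) : ℝ) / (K : ℝ)) ^ c :=
  choose_ratio_lt_pow_general (Nat.sub_pos_of_lt hmK) (Nat.sub_lt (hm.trans hmK.le) hm) hc2 hcK
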